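/- Let α ∈ (0,1) and λ > 0, and define u : ℝ → ℝ → ℝ by u(t, x) = √(α/(4·π·λ·t^α)) · exp(−(α/(4·λ·t^α))·x²) for t > 0. Then for every t > 0 and every x ∈ ℝ, the conformable fractional derivative of order α of s ↦ u(s, x) at t exists and equals λ · ∂²u/∂x² (t, x); that is, (u(t + ε·t^{1−α}, x) − u(t, x))/ε tends to λ · deriv (deriv (fun y => u t y)) x as ε tends to 0 (through nonzero values). -/

import Mathlib

open Real Filter Topology

/-!
The new time variable `τ = (λ / α) t ^ α` satisfies `T_α τ = t ^ (1 - α) dτ/dt = λ`, and in this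
variable `u (t, x)` is the classical heat kernel `K (τ, x)`. The chain rule and `K_τ = K_xx` then
give `T_α u = λ K_τ = λ u_xx`.
-/

/-- The conformable fractional derivative of order `α` of `f` at `t` exists and equals `f'`.
For `t ≤ 0` the real power `t ^ (1 - α)` takes Mathlib's conventional values. -/
def HasConformableDerivAt (α : ℝ) (f : ℝ → ℝ) (f' t : ℝ) : Prop :=
  Tendsto (fun ε : ℝ => (f (t + ε * t ^ (1 - α)) - f t) / ε) (𝓝[≠] 0) (𝓝 f')

theorem hasConformableDerivAt_of_hasDerivAt {f : ℝ → ℝ} {f' t : ℝ} (α : ℝ)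
    (hf : HasDerivAt f f' t) : HasConformableDerivAt α f (t ^ (1 - α) * f') t := by
  have hline : HasDerivAt (fun ε : ℝ => t + ε * t ^ (1 - α)) (t ^ (1 - α)) 0 := by
    simpa using ((hasDerivAt_id (0 : ℝ)).mul_const (t ^ (1 - α))).const_add t
  have hcomp : HasDerivAt (fun ε : ℝ => f (t + ε * t ^ (1 - α))) (f' * t ^ (1 - α)) 0 :=
    HasDerivAt.comp 0 (by simpa using hf) hline
  simpa [HasConformableDerivAt, div_eq_inv_mul, mul_comm f'] using hcomp.tendsto_slope_zero

theorem HasConformableDerivAt.congr_of_eventuallyEq {α : ℝ} {f g : ℝ → ℝ} {f' t : ℝ}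
    (hf : HasConformableDerivAt α f f' t) (hgf : g =ᶠ[𝓝 t] f) :
    HasConformableDerivAt α g f' t := by
  have hline : Tendsto (fun ε : ℝ => t + ε * t ^ (1 - α)) (𝓝[≠] 0) (𝓝 t) := by
    have hcont : Continuous (fun ε : ℝ => t + ε * t ^ (1 - α)) := by fun_prop
    simpa using (hcont.tendsto 0).mono_left nhdsWithin_le_nhds
  refine hf.congr' ?_
  filter_upwards [hline.eventually hgf] with ε hε
  rw [hε, hgf.eq_of_nhds]

theorem hasConformableDerivAt_comp_const_mul_rpow {g : ℝ → ℝ} {g' α c t : ℝ} (ht : 0 < t)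
    (hg : HasDerivAt g g' (c * t ^ α)) :
    HasConformableDerivAt α (fun s => g (c * s ^ α)) (c * α * g') t := by
  have hpow : HasDerivAt (fun s : ℝ => c * s ^ α) (c * (α * t ^ (α - 1))) t :=
    (hasDerivAt_rpow_const (Or.inl ht.ne')).const_mul c
  have hcancel : t ^ (1 - α) * t ^ (α - 1) = 1 := by
    rw [← rpow_add ht, sub_add_sub_cancel, sub_self, rpow_zero]
  have hval : t ^ (1 - α) * (g' * (c * (α * t ^ (α - 1)))) = c * α * g' := by
    linear_combination c * α * g' * hcancel
  exact hval ▸ hasConformableDerivAt_of_hasDerivAt α (hg.comp t hpow)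

/-- The heat kernel on the line: the fundamental solution of `∂K/∂τ = ∂²K/∂x²`, with the time
`τ` as first argument. For `τ ≤ 0` it is `0`, because `√` is `0` there. -/
noncomputable def heatKernel (τ x : ℝ) : ℝ :=
  (√(4 * π * τ))⁻¹ * exp (-x ^ 2 / (4 * τ))

theorem hasDerivAt_heatKernel_space (τ x : ℝ) :
    HasDerivAt (heatKernel τ) (-x / (2 * τ) * heatKernel τ x) x := by
  have hexponent : HasDerivAt (fun y : ℝ => -y ^ 2 / (4 * τ)) (-(2 * x) / (4 * τ)) x := by
    simpa using ((hasDerivAt_pow 2 x).fun_neg).div_const (4 * τ)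
  refine (hexponent.exp.const_mul (√(4 * π * τ))⁻¹).congr_deriv ?_
  rw [heatKernel]
  ring

theorem deriv_deriv_heatKernel (τ x : ℝ) :
    deriv (deriv (heatKernel τ)) x =
      (x ^ 2 / (4 * τ ^ 2) - 1 / (2 * τ)) * heatKernel τ x := by
  have hderiv : deriv (heatKernel τ) = fun y => -y / (2 * τ) * heatKernel τ y :=
    funext fun y => (hasDerivAt_heatKernel_space τ y).deriv
  have hfactor : HasDerivAt (fun y : ℝ => -y / (2 * τ)) (-1 / (2 * τ)) x :=
    (hasDerivAt_neg x).div_const (2 * τ)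
  rw [hderiv, (hfactor.fun_mul (hasDerivAt_heatKernel_space τ x)).deriv]
  ring

theorem hasDerivAt_heatKernel_time {τ : ℝ} (hτ : 0 < τ) (x : ℝ) :
    HasDerivAt (fun σ => heatKernel σ x)
      ((x ^ 2 / (4 * τ ^ 2) - 1 / (2 * τ)) * heatKernel τ x) τ := by
  have hradicand : 0 < 4 * π * τ := by positivity
  have hsqrt : HasDerivAt (fun σ => √(4 * π * σ)) (4 * π / (2 * √(4 * π * τ))) τ := by
    simpa using ((hasDerivAt_id τ).const_mul (4 * π)).sqrt hradicand.ne'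
  have hinv : HasDerivAt (fun σ => (√(4 * π * σ))⁻¹) (-1 / (2 * τ) * (√(4 * π * τ))⁻¹) τ := by
    refine (hsqrt.fun_inv (sqrt_pos.2 hradicand).ne').congr_deriv ?_
    rw [sq_sqrt hradicand.le]
    field_simp
  have hexponent : HasDerivAt (fun σ : ℝ => -x ^ 2 / (4 * σ)) (x ^ 2 / (4 * τ ^ 2)) τ := by
    refine ((hasDerivAt_const τ (-x ^ 2)).fun_div ((hasDerivAt_id' τ).const_mul 4)
      (by positivity)).congr_deriv ?_
    field_simp
    ring
  refine (hinv.fun_mul hexponent.exp).congr_deriv ?_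
  rw [heatKernel]
  ring

theorem heatKernel_heat_equation {τ : ℝ} (hτ : 0 < τ) (x : ℝ) :
    HasDerivAt (fun σ => heatKernel σ x) (deriv (deriv (heatKernel τ)) x) τ :=
  deriv_deriv_heatKernel τ x ▸ hasDerivAt_heatKernel_time hτ x

theorem heatKernel_div_mul (a b c x : ℝ) :
    heatKernel (b / a * c) x =
      √(a / (4 * π * b * c)) * exp (-(a / (4 * b * c)) * x ^ 2) := by
  have hradicand : (4 * π * (b / a * c))⁻¹ = a / (4 * π * b * c) := by
    simp only [div_eq_mul_inv, mul_inv, inv_inv]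
    ring
  have hexponent : -x ^ 2 / (4 * (b / a * c)) = -(a / (4 * b * c)) * x ^ 2 := by
    simp only [div_eq_mul_inv, mul_inv, inv_inv]
    ring
  rw [heatKernel, ← sqrt_inv, hradicand, hexponent]

theorem conformable_deriv_of_analytic_solution_general
    (α lam : ℝ) (hpos : 0 < lam / α)
    (u : ℝ → ℝ → ℝ)
    (hu : ∀ t x : ℝ, 0 < t →
      u t x = √(α / (4 * π * lam * t ^ α)) * exp (-(α / (4 * lam * t ^ α)) * x ^ 2))
    (t x : ℝ) (ht : 0 < t) :
    HasConformableDerivAt α (fun s => u s x) (lam * deriv (deriv (fun y => u t y)) x) t := by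
  have hkernel {s : ℝ} (hs : 0 < s) : u s = heatKernel (lam / α * s ^ α) :=
    funext fun y => (hu s y hs).trans (heatKernel_div_mul α lam (s ^ α) y).symm
  have hlocal : (fun s => u s x) =ᶠ[𝓝 t] fun s => heatKernel (lam / α * s ^ α) x := by
    filter_upwards [lt_mem_nhds ht] with s hs
    rw [hkernel hs]
  have hα : α ≠ 0 := (div_ne_zero_iff.1 hpos.ne').2
  have hheat := heatKernel_heat_equation (mul_pos hpos (rpow_pos_of_pos ht α)) x
  have hderiv := hasConformableDerivAt_comp_const_mul_rpow ht hheat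
  rw [div_mul_cancel₀ lam hα, ← hkernel ht] at hderiv
  exact hderiv.congr_of_eventuallyEq hlocal

/-- For the analytical solution
`u (t, x) = √(α/(4πλt^α)) * exp (-(α/(4λt^α)) * x²)` of the conformable
time-fractional diffusion equation, the conformable fractional derivative of
order `α` of `s ↦ u (s, x)` at any `t > 0` exists and equals
`λ * ∂²u/∂x² (t, x)`. -/
theorem conformable_deriv_of_analytic_solution
    (α lam : ℝ) (hα : α ∈ Set.Ioo (0 : ℝ) 1) (hlam : 0 < lam)
    (u : ℝ → ℝ → ℝ)
    (hu : ∀ t x : ℝ, 0 < t →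
      u t x = Real.sqrt (α / (4 * π * lam * t ^ α)) *
        Real.exp (-(α / (4 * lam * t ^ α)) * x ^ 2)) :
    ∀ t x : ℝ, 0 < t →
      Tendsto (fun ε : ℝ => (u (t + ε * t ^ (1 - α)) x - u t x) / ε) (𝓝[≠] 0)
        (𝓝 (lam * deriv (deriv (fun y => u t y)) x)) :=
  fun t x ht =>
    conformable_deriv_of_analytic_solution_general α lam (div_pos hlam hα.1) u hu t x ht
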